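/- For every k ≥ 0, the F_k cyclic rotations of the Fibonacci word s_k are mutually distinct; that is, if rotating s_k by i positions and by j positions (0 ≤ i, j < F_k) give the same word, then i = j. -/

import Mathlib

/-- The Fibonacci substitution `S` on the alphabet `{0,1}` (encoded as `Bool`,
with `false` for `0` and `true` for `1`): `S(0) = 1`, `S(1) = 10`. -/
def fibS : Bool → List Bool
  | false => [true]
  | true => [true, false]

/-- The Fibonacci words `s_k = S^k(1)`; the word `s_k` has length `F_k = Nat.fib (k + 2)`. -/
def fibWord : ℕ → List Bool
  | 0 => [true]
  | k + 1 => (fibWord k).flatMap fibS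

/-!
If `w` is fixed by the rotation by `d`, then its prefix `x` of length `d` commutes with `w`, so
`x ^ |w|` and `w ^ d` commute; having equal lengths, they coincide. Counting the letter `a` on both
sides gives `|w| * |x|ₐ = d * |w|ₐ`, and hence `|w| ∣ d` as soon as `|w|` and `|w|ₐ` are coprime.
For the Fibonacci word `s_k` and the letter `1`, they are consecutive Fibonacci numbers.
-/

section Words

variable {α : Type*}

theorem freeMonoid_length_pow (x : FreeMonoid α) (n : ℕ) : (x ^ n).length = n * x.length := by
  induction n with
  | zero => simp
  | succ n ih => rw [pow_succ, FreeMonoid.length_mul, ih, Nat.succ_mul]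

theorem freeMonoid_eq_of_commute_of_length_eq {x y : FreeMonoid α} (h : Commute x y)
    (hlen : x.length = y.length) : x = y :=
  List.append_inj_left h.eq hlen

theorem freeMonoid_pow_length_eq_pow_length_of_commute {x y : FreeMonoid α} (h : Commute x y) :
    x ^ y.length = y ^ x.length := by
  apply freeMonoid_eq_of_commute_of_length_eq (h.pow_pow _ _)
  rw [freeMonoid_length_pow, freeMonoid_length_pow, Nat.mul_comm]

theorem length_mul_countP_eq_of_append_comm {u v : List α} (h : u ++ v = v ++ u) (p : α → Bool) :
    v.length * u.countP p = u.length * v.countP p := by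
  have hpow : FreeMonoid.ofList u ^ v.length = FreeMonoid.ofList v ^ u.length :=
    freeMonoid_pow_length_eq_pow_length_of_commute h
  have hcount := congrArg (fun x => (FreeMonoid.countP (p · = true) x).toAdd) hpow
  simpa only [map_pow, toAdd_pow, FreeMonoid.countP_apply, toAdd_ofAdd, FreeMonoid.toList_ofList,
    Bool.decide_eq_true, smul_eq_mul] using hcount

theorem take_append_comm_of_rotate_eq_self {w : List α} {d : ℕ} (hd : d ≤ w.length)
    (h : w.rotate d = w) : w.take d ++ w = w ++ w.take d := by
  rw [List.rotate_eq_drop_append_take hd] at h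
  calc w.take d ++ w = w.take d ++ (w.drop d ++ w.take d) := by rw [h]
    _ = w ++ w.take d := by rw [← List.append_assoc, List.take_append_drop]

theorem length_dvd_mul_countP_of_rotate_eq_self {w : List α} {d : ℕ} (hd : d ≤ w.length)
    (h : w.rotate d = w) (p : α → Bool) : w.length ∣ d * w.countP p := by
  have hcount := length_mul_countP_eq_of_append_comm (take_append_comm_of_rotate_eq_self hd h) p
  rw [List.length_take_of_le hd] at hcount
  exact Dvd.intro _ hcount

theorem injOn_rotate_of_coprime_length_countP {w : List α} {p : α → Bool}
    (hw : w.length.Coprime (w.countP p)) : Set.InjOn w.rotate (Set.Iio w.length) := by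
  intro i hi j hj h
  wlog hij : i ≤ j generalizing i j
  · exact (this hj hi h.symm (Nat.le_of_not_le hij)).symm
  have hd : j - i < w.length := (Nat.sub_le j i).trans_lt hj
  have hfix : w.rotate (j - i) = w := by
    apply List.rotate_injective i
    simpa only [List.rotate_rotate, Nat.sub_add_cancel hij] using h.symm
  have hdvd : w.length ∣ j - i :=
    hw.dvd_of_dvd_mul_right (length_dvd_mul_countP_of_rotate_eq_self hd.le hfix p)
  exact hij.antisymm (Nat.sub_eq_zero_iff_le.mp (Nat.eq_zero_of_dvd_of_lt hdvd hd))

end Words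

theorem length_flatMap_fibS (l : List Bool) :
    (l.flatMap fibS).length = l.length + l.count true := by
  induction l with
  | nil => rfl
  | cons b l ih => cases b <;> grind [fibS]

theorem count_true_flatMap_fibS (l : List Bool) : (l.flatMap fibS).count true = l.length := by
  induction l with
  | nil => rfl
  | cons b l ih => cases b <;> simp [fibS, ih]

theorem length_fibWord : ∀ k, (fibWord k).length = Nat.fib (k + 2)
  | 0 => rfl
  | 1 => rfl
  | k + 2 => by
    calc (fibWord (k + 2)).length
      _ = (fibWord (k + 1)).length + (fibWord (k + 1)).count true := length_flatMap_fibS _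
      _ = (fibWord (k + 1)).length + (fibWord k).length := by
        rw [fibWord, count_true_flatMap_fibS]
      _ = Nat.fib (k + 3) + Nat.fib (k + 2) := by rw [length_fibWord (k + 1), length_fibWord k]
      _ = Nat.fib (k + 4) := by rw [Nat.add_comm, ← Nat.fib_add_two]

theorem count_true_fibWord : ∀ k, (fibWord k).count true = Nat.fib (k + 1)
  | 0 => rfl
  | k + 1 => by rw [fibWord, count_true_flatMap_fibS, length_fibWord]

theorem coprime_length_count_true_fibWord (k : ℕ) :
    (fibWord k).length.Coprime ((fibWord k).count true) := by
  rw [length_fibWord, count_true_fibWord]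
  exact (Nat.fib_coprime_fib_succ (k + 1)).symm

/-- For every `k ≥ 0`, the `F_k` cyclic rotations of `s_k` are mutually distinct:
if rotating `s_k` by `i` positions and by `j` positions (`0 ≤ i, j < F_k`) give the
same word, then `i = j`.  (Here `F_k = Nat.fib (k + 2)` and
`u.rotate i = u_{i+1} ... u_n u_1 ... u_i`.) -/
theorem fibWord_rotations_distinct (k : ℕ) :
    ∀ i j, i < Nat.fib (k + 2) → j < Nat.fib (k + 2) →
      (fibWord k).rotate i = (fibWord k).rotate j → i = j := by
  intro i j hi hj h
  rw [← length_fibWord] at hi hj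
  exact injOn_rotate_of_coprime_length_countP (coprime_length_count_true_fibWord k) hi hj h
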